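/- Let m ≥ 2 be a natural number and let X be a complex Banach space such that the density of the dual space X* equipped with the weak-star topology is strictly greater than ℶ_{m−2}. Then every continuous homogeneous polynomial P : X → ℂ of degree m has a nonseparable zero subspace, i.e., a nonseparable linear subspace Y ⊆ X with P(y) = 0 for all y ∈ Y. -/

import Mathlib

noncomputable section

universe u

/-- The density character of a topological space: the smallest cardinality of a dense
subset. -/
def densityChar (α : Type u) [TopologicalSpace α] : Cardinal.{u} :=
  sInf {c : Cardinal.{u} | ∃ s : Set α, Dense s ∧ Cardinal.mk s = c}

/-!
A set of functionals with trivial common kernel has weak-star dense span. Hence, if the weak-star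
density of `X*` exceeds an infinite cardinal `κ`, any `κ` functionals have a nonzero common zero.

Suppose that any `μ` homogeneous polynomials of degree at most `d` have a nonzero common zero.
Choose vectors by transfinite recursion, each annihilating all the polynomials of degree at most
`d` obtained by inserting earlier vectors into the given polynomials of degree at most `d + 1`.
Along such a family the mixed terms vanish, so the given polynomials become diagonal. If there are
`κ` of them and `μ = 2 ^ κ`, then among `μ⁺` vectors there are two, `x` and `y`, at which they all
take the same values, and `x + z y` with `z ^ (d + 1) = -1` is a zero of those of degree `d + 1`.
Each degree thus costs one exponential.

For a single polynomial `p` of degree `d + 1`, one diagonal equation in two variables can be solved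
without the pigeonhole principle, which is why `ℶ_{m-2}` suffices for degree `m`. A family of
`ω₁` zeros of `p` along which `p` is diagonal spans a zero subspace. This span is nonseparable
because the family can be chosen with functionals `f i` such that `f i (x i) ≠ 0` while
`f i (x j) = 0` for `i < j`.
-/

open Cardinal Set TopologicalSpace

section Cardinality

theorem mk_addSubmonoid_closure_le {M : Type u} [AddMonoid M] (s : Set M) :
    #(AddSubmonoid.closure s) ≤ max ℵ₀ #s := by
  have range_lift : (AddSubmonoid.closure s : Set M) =
      range (FreeAddMonoid.lift ((↑) : s → M)) := by
    rw [AddSubmonoid.closure_eq_mrange, AddMonoidHom.coe_mrange]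
  calc #(AddSubmonoid.closure s : Set M)
      ≤ #(FreeAddMonoid s) := range_lift ▸ mk_range_le
    _ ≤ max ℵ₀ #s := mk_list_le_max s

theorem mk_le_continuum_of_secondCountableTopology (α : Type u) [TopologicalSpace α]
    [T0Space α] [SecondCountableTopology α] : #α ≤ 𝔠 := by
  have basis_separates : Function.Injective
      fun (a : α) => {V : countableBasis α | a ∈ V.1} := fun a b hab =>
    (isBasis_countableBasis α).eq_iff.2 fun V hV => Set.ext_iff.1 hab ⟨V, hV⟩
  calc #α ≤ 2 ^ #(countableBasis α) := mk_set (α := countableBasis α) ▸ mk_le_of_injective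
        basis_separates
    _ ≤ 2 ^ ℵ₀ := power_le_power_left two_ne_zero
        (le_aleph0_iff_set_countable.2 (countable_countableBasis α))
    _ = 𝔠 := two_power_aleph0

theorem mk_Iio_toType_ord_succ_le {μ : Cardinal.{u}} (i : (Order.succ μ).ord.ToType) :
    #(Iio i) ≤ μ := by
  have mk_Iio_lt_succ : #(Iio i) < #(Order.succ μ).ord.ToType := mk_Iio_lt i (by simp)
  rwa [mk_ord_toType, Order.lt_succ_iff] at mk_Iio_lt_succ

theorem exists_lt_forall_apply_eq {I : Type u} [LinearOrder I] {α : Type u} {K : Type}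
    {κ : Cardinal.{u}} (hκ : ℵ₀ ≤ κ) (hI : 2 ^ κ < #I) (hK : #K ≤ 𝔠) {S : Set (α → K)}
    (hS : #S ≤ κ) (x : I → α) : ∃ i j, i < j ∧ ∀ p ∈ S, p (x i) = p (x j) := by
  have mk_values_lt : #(S → K) < #I := by
    refine lt_of_le_of_lt ?_ hI
    calc #(S → K) = lift.{u} #K ^ #S := by rw [mk_arrow, lift_uzero]
      _ ≤ 𝔠 ^ #S := power_le_power_right (lift_le_continuum.2 hK)
      _ ≤ 𝔠 ^ κ := power_le_power_left continuum_ne_zero hS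
      _ = 2 ^ κ := by rw [← two_power_aleph0, ← power_mul, aleph0_mul_eq hκ]
  have not_injective : ¬ Function.Injective fun i (p : S) => p.1 (x i) := fun hinj =>
    mk_values_lt.not_ge (mk_le_of_injective hinj)
  obtain ⟨i, j, hij, hne⟩ := Function.not_injective_iff.1 not_injective
  have agree : ∀ p ∈ S, p (x i) = p (x j) := fun p hp => congrFun hij ⟨p, hp⟩
  rcases hne.lt_or_gt with hlt | hgt
  · exact ⟨i, j, hlt, agree⟩
  · exact ⟨j, i, hgt, fun p hp => (agree p hp).symm⟩

theorem exists_family_forall_image_Iio {α : Type u} {μ : Cardinal.{u}} {R : Set α → α → Prop}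
    (hR : ∀ B : Set α, #B ≤ μ → ∃ y, R B y) {I : Type u} [LinearOrder I] [WellFoundedLT I]
    (hI : ∀ i : I, #(Iio i) ≤ μ) : ∃ x : I → α, ∀ i, R (x '' Iio i) (x i) := by
  have mk_range_Iio_le (i : I) (x : Iio i → α) : #(range x) ≤ μ := mk_range_le.trans (hI i)
  choose next hnext using hR
  let x : I → α := wellFounded_lt.fix fun i earlier =>
    next (range fun j : Iio i => earlier j j.2) (mk_range_Iio_le i _)
  have x_eq (i : I) : x i = next (range fun j : Iio i => x j) (mk_range_Iio_le i _) :=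
    wellFounded_lt.fix_eq _ i
  refine ⟨x, fun i => ?_⟩
  rw [image_eq_range, x_eq i]
  exact hnext _ _

end Cardinality

section Density

theorem densityChar_le_mk_of_dense {α : Type u} [TopologicalSpace α] {s : Set α} (hs : Dense s) :
    densityChar α ≤ #s :=
  csInf_le' ⟨s, hs, rfl⟩

variable {𝕜 : Type*}

theorem densityChar_le_of_dense_span [Semiring 𝕜] [TopologicalSpace 𝕜] [SeparableSpace 𝕜]
    {M : Type u} [AddCommMonoid M] [Module 𝕜 M] [TopologicalSpace M] [ContinuousAdd M]
    [ContinuousSMul 𝕜 M] {G : Set M} (hG : Dense (Submodule.span 𝕜 G : Set M)) :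
    densityChar M ≤ max ℵ₀ #G := by
  let D : Set M := range fun q : ℕ × G => denseSeq 𝕜 q.1 • (q.2 : M)
  have mk_D_le : #D ≤ max ℵ₀ #G :=
    calc #D ≤ #(ℕ × G) := mk_range_le
      _ = ℵ₀ * #G := by simp
      _ ≤ max ℵ₀ #G := by simpa using mul_le_max ℵ₀ #G
  let S := AddSubmonoid.closure D
  have span_le : (Submodule.span 𝕜 G : Set M) ⊆ closure S := by
    intro g hg
    change g ∈ S.topologicalClosure
    induction hg using Submodule.closure_induction with
    | zero => exact zero_mem _
    | add x y _ _ hx hy => exact add_mem hx hy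
    | smul_mem r x hx =>
      have mem_closure : r • x ∈ closure ((· • x) '' range (denseSeq 𝕜)) :=
        (continuous_id.smul continuous_const).range_subset_closure_image_dense
          (denseRange_denseSeq 𝕜) (mem_range_self r)
      refine closure_mono ?_ mem_closure
      rintro _ ⟨_, ⟨n, rfl⟩, rfl⟩
      exact AddSubmonoid.subset_closure ⟨(n, ⟨x, hx⟩), rfl⟩
  have dense_S : Dense (S : Set M) := dense_closure.1 (hG.mono span_le)
  calc densityChar M ≤ #S := densityChar_le_mk_of_dense dense_S
    _ ≤ max ℵ₀ #D := mk_addSubmonoid_closure_le D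
    _ ≤ max ℵ₀ #G := max_le (le_max_left _ _) mk_D_le

variable [Field 𝕜] [TopologicalSpace 𝕜] [IsTopologicalRing 𝕜]
  {X : Type*} [AddCommGroup X] [Module 𝕜 X] [TopologicalSpace X]

theorem exists_mem_span_eqOn_of_separating {G : Set (WeakDual 𝕜 X)}
    (hG : ∀ x : X, (∀ g ∈ G, g x = 0) → x = 0) (φ : WeakDual 𝕜 X) (F : Finset X) :
    ∃ g ∈ Submodule.span 𝕜 G, EqOn g φ F := by
  let E := Submodule.span 𝕜 (F : Set X)
  let restrict : WeakDual 𝕜 X →ₗ[𝕜] Module.Dual 𝕜 E :=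
    { toFun := fun g => g.toLinearMap.domRestrict E
      map_add' := fun _ _ => rfl
      map_smul' := fun _ _ => rfl }
  let W := (Submodule.span 𝕜 G).map restrict
  have W_separates : W.dualCoannihilator = ⊥ := by
    refine (Submodule.eq_bot_iff _).2 fun x hx => Subtype.ext (hG x fun g hg => ?_)
    exact (Submodule.mem_dualCoannihilator x).1 hx _ ⟨g, Submodule.subset_span hg, rfl⟩
  have W_eq_top : W = ⊤ := by
    rw [← Subspace.dualCoannihilator_dualAnnihilator_eq (W := W), W_separates,
      Submodule.dualAnnihilator_bot]
  obtain ⟨g, hg, hgφ⟩ : restrict φ ∈ W := W_eq_top ▸ Submodule.mem_top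
  exact ⟨g, hg, fun x hx => LinearMap.congr_fun hgφ ⟨x, Submodule.subset_span hx⟩⟩

theorem dense_span_of_separating {G : Set (WeakDual 𝕜 X)}
    (hG : ∀ x : X, (∀ g ∈ G, g x = 0) → x = 0) :
    Dense (Submodule.span 𝕜 G : Set (WeakDual 𝕜 X)) := by
  intro φ
  choose g g_mem g_eqOn using exists_mem_span_eqOn_of_separating hG φ
  have tendsto_g : Filter.Tendsto g Filter.atTop (nhds φ) := by
    rw [tendsto_iff_forall_eval_tendsto_topDualPairing]
    intro x
    refine tendsto_const_nhds.congr' ?_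
    filter_upwards [Filter.eventually_ge_atTop {x}] with F hF
    exact (g_eqOn F (Finset.singleton_subset_iff.1 hF)).symm
  exact mem_closure_of_tendsto tendsto_g (.of_forall g_mem)

theorem exists_ne_zero_forall_apply_eq_zero_of_lt_densityChar [SeparableSpace 𝕜]
    {κ : Cardinal} (hκ : ℵ₀ ≤ κ) (hX : κ < densityChar (WeakDual 𝕜 X))
    {G : Set (WeakDual 𝕜 X)} (hG : #G ≤ κ) : ∃ x : X, x ≠ 0 ∧ ∀ g ∈ G, g x = 0 := by
  by_contra! not_exists
  have separating (x : X) (hx : ∀ g ∈ G, g x = 0) : x = 0 := by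
    by_contra hx0
    obtain ⟨g, hg, hgx⟩ := not_exists x hx0
    exact hgx (hx g hg)
  exact hX.not_ge ((densityChar_le_of_dense_span (dense_span_of_separating separating)).trans
    (max_le hκ hG))

end Density

section HomogeneousPolynomials

variable {𝕜 X : Type*} [CommSemiring 𝕜] [AddCommMonoid X] [Module 𝕜 X]

theorem map_sum_smul_eq_sum_of_nonconstant_eq_zero {ι I : Type*} [Fintype ι] [Nonempty ι]
    (A : MultilinearMap 𝕜 (fun _ : ι => X) 𝕜) {x : I → X}
    (hA : ∀ r : ι → I, (∀ i, r ≠ fun _ => i) → A (fun a => x (r a)) = 0)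
    (F : Finset I) (c : I → 𝕜) :
    A (fun _ => ∑ i ∈ F, c i • x i) =
      ∑ i ∈ F, c i ^ Fintype.card ι * A fun _ => x i := by
  classical
  let a₀ : ι := Classical.arbitrary ι
  rw [MultilinearMap.map_sum_finset]
  symm
  refine Finset.sum_of_injOn (fun i _ => i) (fun i _ j _ hij => congrFun hij a₀)
    (fun i hi => by simpa using hi) (fun r hr r_notMem => ?_) (fun i _ => ?_)
  · have r_nonconstant (i : I) : r ≠ fun _ => i := by
      rintro rfl
      exact r_notMem ⟨i, Fintype.mem_piFinset.1 hr a₀, rfl⟩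
    rw [MultilinearMap.map_smul_univ, hA r r_nonconstant, smul_zero]
  · simp [MultilinearMap.map_smul_univ]

/-- The restriction of `p` to the span of the family `x` is the diagonal form of degree `n` in
the coefficients. -/
def ActsDiagonally {I : Type*} (n : ℕ) (p : X → 𝕜) (x : I → X) : Prop :=
  ∀ (F : Finset I) (c : I → 𝕜), p (∑ i ∈ F, c i • x i) = ∑ i ∈ F, c i ^ n * p (x i)

theorem ActsDiagonally.apply_add_smul {I : Type*} {n : ℕ} {p : X → 𝕜} {x : I → X}
    (h : ActsDiagonally n p x) {i j : I} (hij : i ≠ j) (z : 𝕜) :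
    p (x i + z • x j) = p (x i) + z ^ n * p (x j) := by
  classical
  simpa [Finset.sum_pair hij, hij.symm] using h {i, j} (Function.update (fun _ => z) i 1)

theorem ActsDiagonally.eq_zero_of_mem_span {I : Type*} {n : ℕ} {p : X → 𝕜} {x : I → X}
    (h : ActsDiagonally n p x) (hx : ∀ i, p (x i) = 0) {y : X}
    (hy : y ∈ Submodule.span 𝕜 (range x)) : p y = 0 := by
  obtain ⟨c, rfl⟩ := Finsupp.mem_span_range_iff_exists_finsupp.1 hy
  exact (h c.support c).trans (Finset.sum_eq_zero fun i _ => by rw [hx i, mul_zero])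

variable [TopologicalSpace 𝕜] [TopologicalSpace X]

variable (𝕜 X) in
/-- The continuous homogeneous polynomials of degree `n` on `X`, regarded as functions. The
multilinear form is not required to be symmetric. -/
def homogeneousPolynomials (n : ℕ) : Set (X → 𝕜) :=
  range fun (A : ContinuousMultilinearMap 𝕜 (fun _ : Fin n => X) 𝕜) (x : X) => A fun _ => x

variable (𝕜 X) in
/-- The continuous homogeneous polynomials on `X` whose degree is between `1` and `d`; constants
are excluded so that every member vanishes at `0`. -/
def homogeneousPolynomialsLE (d : ℕ) : Set (X → 𝕜) :=
  ⋃ n ∈ Icc 1 d, homogeneousPolynomials 𝕜 X n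

theorem homogeneousPolynomials_subset_LE {n d : ℕ} (hn : 1 ≤ n) (hnd : n ≤ d) :
    homogeneousPolynomials 𝕜 X n ⊆ homogeneousPolynomialsLE 𝕜 X d :=
  subset_biUnion_of_mem (u := homogeneousPolynomials 𝕜 X) (mem_Icc.2 ⟨hn, hnd⟩)

theorem exists_multilinear_of_mem_homogeneousPolynomialsLE {d : ℕ} {p : X → 𝕜}
    (hp : p ∈ homogeneousPolynomialsLE 𝕜 X d) :
    ∃ n ∈ Icc 1 d, ∃ A : ContinuousMultilinearMap 𝕜 (fun _ : Fin n => X) 𝕜,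
      (fun x => A fun _ => x) = p := by
  simpa only [homogeneousPolynomialsLE, mem_iUnion₂, exists_prop, homogeneousPolynomials,
    mem_range] using hp

theorem homogeneousPolynomialsLE_mono {d e : ℕ} (h : d ≤ e) :
    homogeneousPolynomialsLE 𝕜 X d ⊆ homogeneousPolynomialsLE 𝕜 X e :=
  biUnion_subset_biUnion_left (Icc_subset_Icc_right h)

theorem coe_mem_homogeneousPolynomials_one (f : X →L[𝕜] 𝕜) :
    ⇑f ∈ homogeneousPolynomials 𝕜 X 1 :=
  ⟨ContinuousMultilinearMap.ofSubsingleton 𝕜 X 𝕜 (0 : Fin 1) f, rfl⟩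

theorem exists_continuousLinearMap_of_mem_homogeneousPolynomials_one {p : X → 𝕜}
    (hp : p ∈ homogeneousPolynomials 𝕜 X 1) : ∃ f : X →L[𝕜] 𝕜, ⇑f = p := by
  obtain ⟨A, rfl⟩ := hp
  exact ⟨(ContinuousMultilinearMap.ofSubsingleton 𝕜 X 𝕜 (0 : Fin 1)).symm A, rfl⟩

theorem piecewise_mem_homogeneousPolynomials {n : ℕ}
    (A : ContinuousMultilinearMap 𝕜 (fun _ : Fin n => X) 𝕜) (s : Finset (Fin n))
    (v : Fin n → X) :
    (fun y => A (s.piecewise (fun _ => y) v)) ∈ homogeneousPolynomials 𝕜 X s.card := by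
  let restricted : ContinuousMultilinearMap 𝕜 (fun _ : {i // i ∈ s} => X) 𝕜 :=
    { A.toMultilinearMap.domDomRestrict (· ∈ s) fun i => v i with
      cont := A.cont.comp <| continuous_pi fun i => by
        by_cases hi : i ∈ s
        · simpa only [hi, dite_true] using continuous_apply _
        · simpa only [hi, dite_false] using continuous_const }
  exact ⟨restricted.domDomCongr s.equivFin, rfl⟩

/-- The polynomials of lower degree obtained from `A` by filling some, but not all, of its slots
with elements of `B` and putting the variable into the remaining slots `s`. The values of `v`
on `s` are irrelevant. -/
def partialPolynomials {n : ℕ} (A : ContinuousMultilinearMap 𝕜 (fun _ : Fin n => X) 𝕜)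
    (B : Set X) : Set (X → 𝕜) :=
  {q | ∃ (s : Finset (Fin n)) (v : Fin n → X), s.Nonempty ∧ s ≠ Finset.univ ∧
    (∀ i ∉ s, v i ∈ B) ∧ q = fun y => A (s.piecewise (fun _ => y) v)}

theorem partialPolynomials_subset {n d : ℕ} (hn : n ≤ d + 1)
    (A : ContinuousMultilinearMap 𝕜 (fun _ : Fin n => X) 𝕜) (B : Set X) :
    partialPolynomials A B ⊆ homogeneousPolynomialsLE 𝕜 X d := by
  rintro _ ⟨s, v, s_nonempty, s_ne_univ, -, rfl⟩
  have card_lt : s.card < n := by simpa using s.card_lt_iff_ne_univ.2 s_ne_univ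
  exact homogeneousPolynomials_subset_LE s_nonempty.card_pos (by lia)
    (piecewise_mem_homogeneousPolynomials A s v)

/- In a nonconstant tuple of indices, the entries equal to the largest index fill some but not all
slots, so the value of `A` on the tuple is a partial polynomial evaluated at the last vector. -/
theorem actsDiagonally_of_partialPolynomials_eq_zero {I : Type*} [LinearOrder I] {n : ℕ}
    (hn : 1 ≤ n) (A : ContinuousMultilinearMap 𝕜 (fun _ : Fin n => X) 𝕜) {x : I → X}
    (h : ∀ i, ∀ q ∈ partialPolynomials A (x '' Iio i), q (x i) = 0) :
    ActsDiagonally n (fun y => A fun _ => y) x := by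
  have : Nonempty (Fin n) := ⟨⟨0, hn⟩⟩
  have nonconstant_eq_zero (r : Fin n → I) (hr : ∀ i, r ≠ fun _ => i) :
      A (fun a => x (r a)) = 0 := by
    obtain ⟨a₀, r_le⟩ := Finite.exists_max r
    let s := Finset.univ.filter fun a => r a = r a₀
    have s_ne_univ : s ≠ Finset.univ := fun hs =>
      hr (r a₀) (funext fun a => Finset.filter_eq_self.1 hs a (Finset.mem_univ a))
    have r_lt (a : Fin n) (ha : a ∉ s) : r a < r a₀ :=
      (r_le a).lt_of_ne fun hra => ha (by simp [s, hra])
    have piecewise_eq : s.piecewise (fun _ => x (r a₀)) (fun a => x (r a)) =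
        fun a => x (r a) := by
      refine funext fun a => ?_
      by_cases ha : r a = r a₀ <;> simp [s, ha]
    rw [← piecewise_eq]
    exact h (r a₀) _ ⟨s, fun a => x (r a), ⟨a₀, by simp [s]⟩, s_ne_univ,
      fun a ha => mem_image_of_mem x (r_lt a ha), rfl⟩
  intro F c
  simpa using map_sum_smul_eq_sum_of_nonconstant_eq_zero A.toMultilinearMap nonconstant_eq_zero F c

end HomogeneousPolynomials

section TriangularFamilies

/-- A family is triangular if each of its members is separated from all later ones by a continuous
functional that kills the latter. -/
def IsTriangular (𝕜 : Type*) {X I : Type*} [Semiring 𝕜] [TopologicalSpace 𝕜] [AddCommMonoid X]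
    [Module 𝕜 X] [TopologicalSpace X] [LT I] (x : I → X) : Prop :=
  ∀ i, ∃ f : X →L[𝕜] 𝕜, f (x i) ≠ 0 ∧ ∀ j, i < j → f (x j) = 0

theorem countable_of_isOpen_of_notMem {Y I : Type*} [TopologicalSpace Y]
    [SecondCountableTopology Y] [LinearOrder I] {y : I → Y} {U : I → Set Y}
    (hU : ∀ i, IsOpen (U i)) (mem : ∀ i, y i ∈ U i) (notMem : ∀ i j, i < j → y j ∉ U i) :
    Countable I := by
  have exists_basic (i : I) : ∃ V : countableBasis Y, y i ∈ V.1 ∧ V.1 ⊆ U i := by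
    obtain ⟨V, hV, hyV, hVU⟩ :=
      (isBasis_countableBasis Y).exists_subset_of_mem_open (mem i) (hU i)
    exact ⟨⟨V, hV⟩, hyV, hVU⟩
  choose V mem_V V_subset using exists_basic
  have V_ne {i j : I} (hij : i < j) : V i ≠ V j := fun hV =>
    notMem i j hij (V_subset i (hV ▸ mem_V j))
  have V_injective : Function.Injective V := fun i j hV => by
    by_contra hij
    rcases lt_or_gt_of_ne hij with hlt | hgt
    · exact V_ne hlt hV
    · exact V_ne hgt hV.symm
  have := (countable_countableBasis Y).to_subtype
  exact V_injective.countable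

namespace IsTriangular

variable {𝕜 X I : Type*} [Semiring 𝕜] [TopologicalSpace 𝕜] [AddCommMonoid X] [Module 𝕜 X]
  [TopologicalSpace X]

theorem ne_zero [LT I] {x : I → X} (hx : IsTriangular 𝕜 x) (i : I) : x i ≠ 0 := by
  obtain ⟨f, hfi, -⟩ := hx i
  exact fun h => hfi (h ▸ map_zero f)

theorem add_smul_ne_zero [LT I] {x : I → X} (hx : IsTriangular 𝕜 x) {i j : I} (hij : i < j)
    (z : 𝕜) : x i + z • x j ≠ 0 := by
  obtain ⟨f, hfi, hfj⟩ := hx i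
  intro h
  apply hfi
  simpa [hfj j hij] using congrArg f h

theorem not_isSeparable [T1Space 𝕜] [PseudoMetrizableSpace X] [LinearOrder I] [Uncountable I]
    {x : I → X} (hx : IsTriangular 𝕜 x) {Y : Set X} (hY : ∀ i, x i ∈ Y) : ¬ IsSeparable Y := by
  intro separable_Y
  have := separable_Y.secondCountableTopology
  choose f f_ne_zero f_eq_zero using hx
  have isOpen_ne_zero (i : I) : IsOpen {y : Y | f i y ≠ 0} :=
    isOpen_compl_singleton.preimage ((f i).continuous.comp continuous_subtype_val)
  exact not_countable (countable_of_isOpen_of_notMem (y := fun i => ⟨x i, hY i⟩) isOpen_ne_zero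
    f_ne_zero fun i j hij => not_not.2 (f_eq_zero i j hij))

end IsTriangular

end TriangularFamilies

section CommonZeros

variable {𝕜 : Type} {X : Type u} [TopologicalSpace 𝕜] [TopologicalSpace X]

section Semiring

variable [CommSemiring 𝕜] [AddCommMonoid X] [Module 𝕜 X]

theorem mk_partialPolynomials_le {n : ℕ}
    (A : ContinuousMultilinearMap 𝕜 (fun _ : Fin n => X) 𝕜) {B : Set X} {μ : Cardinal.{u}}
    (hμ : ℵ₀ ≤ μ) (hB : #B ≤ μ) : #(partialPolynomials A B) ≤ μ := by
  let fill (q : Finset (Fin n) × (Fin n → ↥(insert 0 B))) : X → 𝕜 := fun y =>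
    A (q.1.piecewise (fun _ => y) fun i => q.2 i)
  have subset_range : partialPolynomials A B ⊆ range fill := by
    rintro _ ⟨s, v, -, -, v_mem, rfl⟩
    have filled_mem (i : Fin n) : s.piecewise 0 v i ∈ insert 0 B := by
      by_cases hi : i ∈ s
      · simp [hi]
      · simp [hi, v_mem i hi]
    refine ⟨(s, fun i => ⟨_, filled_mem i⟩), funext fun y => congrArg A (funext fun i => ?_)⟩
    by_cases hi : i ∈ s <;> simp [hi]
  have mk_insert_zero_le : #↥(insert 0 B) ≤ μ :=
    mk_insert_le.trans (add_le_of_le hμ hB (one_le_aleph0.trans hμ))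
  calc #(partialPolynomials A B) ≤ #(range fill) := mk_le_mk_of_subset subset_range
    _ ≤ #(Finset (Fin n) × (Fin n → ↥(insert 0 B))) := by simpa using mk_range_le_lift (f := fill)
    _ = lift.{u} #(Finset (Fin n)) * #↥(insert 0 B) ^ n := by rw [mk_prod]; simp
    _ ≤ μ := mul_le_of_le hμ ((lift_le_aleph0.2 mk_le_aleph0).trans hμ)
        ((power_le_power_right mk_insert_zero_le).trans (power_nat_le hμ))

variable (𝕜) in
/-- `Z` contains a nonzero common zero of any at most `μ` continuous homogeneous polynomials of
positive degree at most `d`. -/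
def HasCommonZeros (Z : Set X) (μ : Cardinal.{u}) (d : ℕ) : Prop :=
  ∀ S ⊆ homogeneousPolynomialsLE 𝕜 X d, #S ≤ μ → ∃ x ∈ Z, x ≠ 0 ∧ ∀ p ∈ S, p x = 0

namespace HasCommonZeros

variable {Z : Set X} {μ : Cardinal.{u}} {d : ℕ}

theorem inter_zeros (h : HasCommonZeros 𝕜 Z μ d) (hμ : ℵ₀ ≤ μ) {T : Set (X → 𝕜)}
    (hT : T ⊆ homogeneousPolynomialsLE 𝕜 X d) (mk_T_le : #T ≤ μ) :
    HasCommonZeros 𝕜 (Z ∩ {x | ∀ p ∈ T, p x = 0}) μ d := by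
  intro S hS mk_S_le
  obtain ⟨x, hxZ, hx0, hx⟩ := h (S ∪ T) (union_subset hS hT)
    ((mk_union_le S T).trans (add_le_of_le hμ mk_S_le mk_T_le))
  exact ⟨x, ⟨hxZ, fun p hp => hx p (Or.inr hp)⟩, hx0, fun p hp => hx p (Or.inl hp)⟩

theorem exists_forall_partialPolynomials_eq_zero (h : HasCommonZeros 𝕜 Z μ d) (hμ : ℵ₀ ≤ μ)
    (hd : 1 ≤ d) {ι : Type u} (mk_ι_le : #ι ≤ μ) {n : ι → ℕ} (hn : ∀ a, n a ≤ d + 1)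
    (A : ∀ a, ContinuousMultilinearMap 𝕜 (fun _ : Fin (n a) => X) 𝕜) (φ : X → X →L[𝕜] 𝕜)
    {B : Set X} (mk_B_le : #B ≤ μ) :
    ∃ y ∈ Z, y ≠ 0 ∧ (∀ b ∈ B, φ b y = 0) ∧ ∀ a, ∀ q ∈ partialPolynomials (A a) B, q y = 0 := by
  let T : Set (X → 𝕜) := (⋃ a, partialPolynomials (A a) B) ∪ (fun b => ⇑(φ b)) '' B
  have T_subset : T ⊆ homogeneousPolynomialsLE 𝕜 X d := by
    refine union_subset (iUnion_subset fun a => partialPolynomials_subset (hn a) (A a) B) ?_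
    rintro _ ⟨b, -, rfl⟩
    exact homogeneousPolynomials_subset_LE le_rfl hd (coe_mem_homogeneousPolynomials_one (φ b))
  have mk_iUnion_partial_le : #(⋃ a, partialPolynomials (A a) B) ≤ μ :=
    (mk_iUnion_le _).trans (mul_le_of_le hμ mk_ι_le
      (ciSup_le' fun a => mk_partialPolynomials_le (A a) hμ mk_B_le))
  have mk_T_le : #T ≤ μ :=
    (mk_union_le _ _).trans (add_le_of_le hμ mk_iUnion_partial_le (mk_image_le.trans mk_B_le))
  obtain ⟨y, hyZ, hy0, hy⟩ := h T T_subset mk_T_le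
  exact ⟨y, hyZ, hy0, fun b hb => hy _ (Or.inr (mem_image_of_mem _ hb)),
    fun a q hq => hy q (Or.inl (mem_iUnion_of_mem a hq))⟩

end HasCommonZeros

end Semiring

variable [Field 𝕜] [AddCommGroup X] [Module 𝕜 X]

theorem hasCommonZeros_one [IsTopologicalRing 𝕜] [SeparableSpace 𝕜] {κ : Cardinal.{u}}
    (hκ : ℵ₀ ≤ κ) (hX : κ < densityChar (WeakDual 𝕜 X)) :
    HasCommonZeros 𝕜 (univ : Set X) κ 1 := by
  intro S hS mk_S_le
  have exists_functional (p : S) : ∃ g : WeakDual 𝕜 X, ∀ x, g x = p.1 x := by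
    obtain ⟨n, ⟨hn, hn'⟩, hp⟩ := mem_iUnion₂.1 (hS p.2)
    obtain rfl := le_antisymm hn' hn
    obtain ⟨f, hf⟩ := exists_continuousLinearMap_of_mem_homogeneousPolynomials_one hp
    exact ⟨StrongDual.toWeakDual f, congrFun hf⟩
  choose g hg using exists_functional
  obtain ⟨x, hx0, hx⟩ := exists_ne_zero_forall_apply_eq_zero_of_lt_densityChar hκ hX
    (mk_range_le.trans mk_S_le : #(range g) ≤ κ)
  exact ⟨x, mem_univ x, hx0, fun p hp => (hg ⟨p, hp⟩ x).symm.trans (hx _ (mem_range_self _))⟩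

namespace HasCommonZeros

variable [SeparatingDual 𝕜 X] {Z : Set X} {μ : Cardinal.{u}} {d : ℕ}

theorem exists_isTriangular_actsDiagonally (h : HasCommonZeros 𝕜 Z μ d) (hμ : ℵ₀ ≤ μ)
    (hd : 1 ≤ d) {S : Set (X → 𝕜)} (hS : S ⊆ homogeneousPolynomialsLE 𝕜 X (d + 1))
    (mk_S_le : #S ≤ μ) {I : Type u} [LinearOrder I] [WellFoundedLT I]
    (hI : ∀ i : I, #(Iio i) ≤ μ) :
    ∃ x : I → X, (∀ i, x i ∈ Z) ∧ IsTriangular 𝕜 x ∧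
      ∀ p ∈ S, ∃ n ∈ Icc 1 (d + 1), p ∈ homogeneousPolynomials 𝕜 X n ∧ ActsDiagonally n p x := by
  have exists_functional (x : X) : ∃ f : X →L[𝕜] 𝕜, x ≠ 0 → f x ≠ 0 := by
    by_cases hx : x = 0
    · exact ⟨0, fun hx' => absurd hx hx'⟩
    · obtain ⟨f, hf⟩ := SeparatingDual.exists_ne_zero (R := 𝕜) hx
      exact ⟨f, fun _ => hf⟩
  choose φ φ_ne_zero using exists_functional
  choose n hn A hA using fun p : S => exists_multilinear_of_mem_homogeneousPolynomialsLE (hS p.2)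
  obtain ⟨x, hx⟩ := exists_family_forall_image_Iio
    (fun _ => h.exists_forall_partialPolynomials_eq_zero hμ hd mk_S_le (fun p => (hn p).2) A φ) hI
  refine ⟨x, fun i => (hx i).1, fun i => ⟨φ (x i), φ_ne_zero _ (hx i).2.1, fun j hij => ?_⟩,
    fun p hp => ⟨n ⟨p, hp⟩, hn _, ⟨A _, hA _⟩, ?_⟩⟩
  · exact (hx j).2.2.1 _ (mem_image_of_mem x hij)
  · have acts := actsDiagonally_of_partialPolynomials_eq_zero (hn ⟨p, hp⟩).1 (A ⟨p, hp⟩)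
      fun i => (hx i).2.2.2 ⟨p, hp⟩
    rwa [hA] at acts

theorem univ_succ [IsAlgClosed 𝕜] (h𝕜 : #𝕜 ≤ 𝔠) {κ : Cardinal.{u}} (hκ : ℵ₀ ≤ κ) (hd : 1 ≤ d)
    (h : HasCommonZeros 𝕜 (univ : Set X) (2 ^ κ) d) :
    HasCommonZeros 𝕜 (univ : Set X) κ (d + 1) := by
  intro S hS mk_S_le
  have aleph0_le : ℵ₀ ≤ 2 ^ κ := hκ.trans (cantor κ).le
  have mk_S_le' : #S ≤ 2 ^ κ := mk_S_le.trans (cantor κ).le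
  let lower := S ∩ homogeneousPolynomialsLE 𝕜 X d
  obtain ⟨x, lower_eq_zero, triangular, diagonal⟩ :=
    (h.inter_zeros aleph0_le (T := lower) inter_subset_right
      ((mk_le_mk_of_subset inter_subset_left).trans mk_S_le')).exists_isTriangular_actsDiagonally
        aleph0_le hd hS mk_S_le' (mk_Iio_toType_ord_succ_le (μ := 2 ^ κ))
  obtain ⟨i, j, hij, agree⟩ := exists_lt_forall_apply_eq hκ
    (by rw [mk_ord_toType]; exact Order.lt_succ _) h𝕜 mk_S_le x
  obtain ⟨z, hz⟩ := IsAlgClosed.exists_pow_nat_eq (-1 : 𝕜) d.succ_pos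
  refine ⟨x i + z • x j, mem_univ _, triangular.add_smul_ne_zero hij z, fun p hp => ?_⟩
  obtain ⟨n, ⟨one_le_n, n_le⟩, p_mem, acts⟩ := diagonal p hp
  rw [acts.apply_add_smul hij.ne]
  rcases Nat.le_succ_iff.1 n_le with hnd | rfl
  · have p_mem_lower : p ∈ lower := ⟨hp, homogeneousPolynomials_subset_LE one_le_n hnd p_mem⟩
    rw [(lower_eq_zero i).2 p p_mem_lower, (lower_eq_zero j).2 p p_mem_lower, mul_zero, add_zero]
  · rw [agree p hp, hz, neg_one_mul, add_neg_cancel]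

theorem zeros_of_univ [IsAlgClosed 𝕜] (h : HasCommonZeros 𝕜 (univ : Set X) μ d) (hμ : ℵ₀ ≤ μ)
    (hd : 1 ≤ d) {p : X → 𝕜} (hp : p ∈ homogeneousPolynomialsLE 𝕜 X (d + 1)) :
    HasCommonZeros 𝕜 {x | p x = 0} μ d := by
  intro S hS mk_S_le
  have insert_subset : insert p S ⊆ homogeneousPolynomialsLE 𝕜 X (d + 1) :=
    insert_subset hp (hS.trans (homogeneousPolynomialsLE_mono d.le_succ))
  have mk_insert_p_le : #↥(insert p S) ≤ μ :=
    mk_insert_le.trans (add_le_of_le hμ mk_S_le (one_le_aleph0.trans hμ))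
  obtain ⟨x, S_eq_zero, triangular, diagonal⟩ :=
    (h.inter_zeros hμ hS mk_S_le).exists_isTriangular_actsDiagonally hμ hd insert_subset
      mk_insert_p_le (I := ULift Bool) fun i => mk_le_aleph0.trans hμ
  let x₀ := x ⟨false⟩
  let x₁ := x ⟨true⟩
  have hlt : (⟨false⟩ : ULift.{u} Bool) < ⟨true⟩ := Bool.false_lt_true
  obtain ⟨n, ⟨one_le_n, -⟩, -, acts⟩ := diagonal p (mem_insert p S)
  by_cases hp₁ : p x₁ = 0
  · exact ⟨x₁, hp₁, triangular.ne_zero _, (S_eq_zero _).2⟩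
  obtain ⟨z, hz⟩ := IsAlgClosed.exists_pow_nat_eq (-(p x₀ / p x₁)) one_le_n
  refine ⟨x₀ + z • x₁, ?_, triangular.add_smul_ne_zero hlt z, fun q hq => ?_⟩
  · calc p (x₀ + z • x₁) = p x₀ + z ^ n * p x₁ := acts.apply_add_smul hlt.ne z
      _ = 0 := by rw [hz, neg_mul, div_mul_cancel₀ _ hp₁, add_neg_cancel]
  · obtain ⟨m, -, -, acts_q⟩ := diagonal q (mem_insert_of_mem p hq)
    rw [acts_q.apply_add_smul hlt.ne z, (S_eq_zero _).2 q hq, (S_eq_zero _).2 q hq, mul_zero,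
      add_zero]

theorem exists_nonseparable_zero_subspace [T1Space 𝕜] [PseudoMetrizableSpace X] {p : X → 𝕜}
    (h : HasCommonZeros 𝕜 {x | p x = 0} ℵ₀ d) (hd : 1 ≤ d)
    (hp : p ∈ homogeneousPolynomialsLE 𝕜 X (d + 1)) :
    ∃ Y : Submodule 𝕜 X, ¬ IsSeparable (Y : Set X) ∧ ∀ y ∈ Y, p y = 0 := by
  obtain ⟨x, p_eq_zero, triangular, diagonal⟩ := h.exists_isTriangular_actsDiagonally le_rfl hd
    (singleton_subset_iff.2 hp) (mk_le_aleph0 (α := ({p} : Set (X → 𝕜))))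
    (mk_Iio_toType_ord_succ_le (μ := ℵ₀))
  obtain ⟨n, -, -, acts⟩ := diagonal p rfl
  have : Uncountable (Order.succ (ℵ₀ : Cardinal.{u})).ord.ToType := by
    rw [← aleph0_lt_mk_iff, mk_ord_toType]
    exact Order.lt_succ _
  exact ⟨Submodule.span 𝕜 (range x),
    triangular.not_isSeparable fun i => Submodule.subset_span (mem_range_self i),
    fun y => acts.eq_zero_of_mem_span p_eq_zero⟩

end HasCommonZeros

theorem hasCommonZeros_of_beth_lt_densityChar [IsAlgClosed 𝕜] [IsTopologicalRing 𝕜]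
    [SeparableSpace 𝕜] [SeparatingDual 𝕜 X] (h𝕜 : #𝕜 ≤ 𝔠) (j k : ℕ)
    (hX : ℶ_ ((j + k : ℕ) : Ordinal) < densityChar (WeakDual 𝕜 X)) :
    HasCommonZeros 𝕜 (univ : Set X) (ℶ_ (j : Ordinal)) (k + 1) := by
  induction k generalizing j with
  | zero => exact hasCommonZeros_one (aleph0_le_beth _) hX
  | succ k ih =>
    have common_zeros : HasCommonZeros 𝕜 (univ : Set X) (2 ^ ℶ_ (j : Ordinal)) (k + 1) := by
      rw [← beth_add_one, ← Nat.cast_succ]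
      exact ih (j + 1) (by rwa [Nat.add_right_comm])
    exact common_zeros.univ_succ h𝕜 (aleph0_le_beth _) (Nat.le_add_left 1 k)

end CommonZeros

theorem exists_nonseparable_zero_subspace_of_large_weak_star_density_general
    {𝕜 : Type} [Field 𝕜] [IsAlgClosed 𝕜] [TopologicalSpace 𝕜] [IsTopologicalRing 𝕜] [T1Space 𝕜]
    [SecondCountableTopology 𝕜]
    {X : Type u} [AddCommGroup X] [Module 𝕜 X] [TopologicalSpace X] [PseudoMetrizableSpace X]
    [SeparatingDual 𝕜 X] (k : ℕ) (hX : ℶ_ (k : Ordinal) < densityChar (WeakDual 𝕜 X))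
    (A : ContinuousMultilinearMap 𝕜 (fun _ : Fin (k + 2) => X) 𝕜) :
    ∃ Y : Submodule 𝕜 X, ¬ IsSeparable (Y : Set X) ∧ ∀ y ∈ Y, (A fun _ => y) = 0 := by
  have A_mem : (fun x => A fun _ => x) ∈ homogeneousPolynomialsLE 𝕜 X (k + 2) :=
    homogeneousPolynomials_subset_LE (Nat.le_add_left 1 _) le_rfl ⟨A, rfl⟩
  have common_zeros : HasCommonZeros 𝕜 (univ : Set X) ℵ₀ (k + 1) := by
    have h := hasCommonZeros_of_beth_lt_densityChar
      (mk_le_continuum_of_secondCountableTopology 𝕜) 0 k (by rwa [Nat.zero_add])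
    rwa [Nat.cast_zero, beth_zero] at h
  have one_le : 1 ≤ k + 1 := Nat.le_add_left 1 k
  exact (common_zeros.zeros_of_univ le_rfl one_le A_mem).exists_nonseparable_zero_subspace
    one_le A_mem

/-- Let `m ≥ 2` and let `X` be a complex Banach space whose dual `X*`, with the weak-star
topology, has density character `> ℶ_{m-2}`. Then every continuous homogeneous polynomial
`P : X → ℂ` of degree `m` (i.e., `P x = A (x, …, x)` for a continuous symmetric `m`-linear
form `A`) has a nonseparable zero subspace. -/
theorem exists_nonseparable_zero_subspace_of_large_weak_star_density
    {X : Type u} [NormedAddCommGroup X] [NormedSpace ℂ X] [CompleteSpace X]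
    (m : ℕ) (hm : 2 ≤ m)
    (hX : Cardinal.beth (↑(m - 2) : Ordinal) < densityChar (WeakDual ℂ X))
    (A : ContinuousMultilinearMap ℂ (fun _ : Fin m => X) ℂ)
    (hsymm : ∀ (x : Fin m → X) (σ : Equiv.Perm (Fin m)), A (x ∘ σ) = A x)
    (P : X → ℂ) (hP : ∀ x, P x = A fun _ => x) :
    ∃ Y : Submodule ℂ X,
      ¬ TopologicalSpace.IsSeparable (Y : Set X) ∧ ∀ y ∈ Y, P y = 0 := by
  obtain ⟨k, rfl⟩ := Nat.exists_eq_add_of_le' hm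
  simpa only [hP] using exists_nonseparable_zero_subspace_of_large_weak_star_density_general k hX A

end
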